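/- Let ρ be a real random variable on a probability space satisfying the log-Metropolis–Hastings-ratio symmetry, and suppose E[ρ²] < ∞. Then for every κ > 0, |E[ρ² · ∫₀^{1/2} (1 − e^{tρ}) dt]| ≤ sinh(κ/2)·E[ρ²] + E[ρ² · 1{ρ < −κ}]. -/

import Mathlib

open MeasureTheory

/-- A real random variable `ρ` on a probability space satisfies the
log-Metropolis–Hastings-ratio symmetry if for every measurable `f : ℝ → ℝ` with
`E[|f(ρ)|] < ∞` one has `E[f(-ρ) e^ρ] = E[f(ρ)]`. -/
def LMHRSymmetric {Ω : Type*} [MeasurableSpace Ω] (P : Measure Ω) (ρ : Ω → ℝ) : Prop :=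
  ∀ f : ℝ → ℝ, Measurable f → Integrable (fun ω => f (ρ ω)) P →
    ∫ ω, f (-ρ ω) * Real.exp (ρ ω) ∂P = ∫ ω, f (ρ ω) ∂P

lemma aux_h (x C : ℝ) (hC : ∀ t : ℝ, 0 < t → t ≤ 1 / 2 → |1 - Real.exp (t * x)| ≤ C) :
    |∫ t in (0 : ℝ)..(1 / 2), (1 - Real.exp (t * x))| ≤ C / 2 := by
  have h := intervalIntegral.norm_integral_le_of_norm_le_const (a := (0 : ℝ)) (b := 1 / 2)
    (f := fun t => 1 - Real.exp (t * x)) (C := C) (by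
      intro t ht
      rw [Set.uIoc_of_le (by norm_num)] at ht
      exact hC t ht.1 ht.2)
  rw [Real.norm_eq_abs] at h
  have h3 : |(1 / 2 : ℝ) - 0| = 1 / 2 := by norm_num
  rw [h3] at h
  linarith

lemma aux_pt (x κ : ℝ) (hκ : 0 < κ) :
    |x ^ 2 * ∫ t in (0 : ℝ)..(1 / 2), (1 - Real.exp (t * x))| ≤
      Real.sinh (κ / 2) * x ^ 2 + (1 / 2 * (Set.Iio (-κ)).indicator (fun y : ℝ => y ^ 2) x
        + 1 / 2 * ((Set.Iio (-κ)).indicator (fun y : ℝ => y ^ 2) (-x) * Real.exp x)) := by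
  have hs : 0 < Real.sinh (κ / 2) := Real.sinh_pos_iff.2 (by linarith)
  have hx := sq_nonneg x
  have he := Real.exp_pos x
  rw [abs_mul, abs_of_nonneg hx]
  by_cases h1 : x < -κ
  · have h1' : ¬ (-x < -κ) := by linarith
    simp only [Set.indicator, Set.mem_Iio, h1, h1', if_true, if_false]
    have := aux_h x 1 (by
      intro t ht _
      have h0 := Real.exp_pos (t * x)
      have h2 : Real.exp (t * x) ≤ 1 := Real.exp_le_one_iff.2 (by nlinarith)
      rw [abs_le]; constructor <;> linarith)
    nlinarith [mul_le_mul_of_nonneg_left this hx, mul_nonneg hs.le hx]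
  · by_cases h2 : -x < -κ
    · simp only [Set.indicator, Set.mem_Iio, h1, h2, if_true, if_false]
      have := aux_h x (Real.exp x) (by
        intro t ht ht2
        have h0 : 1 ≤ Real.exp (t * x) := Real.one_le_exp (by nlinarith)
        have h2 : Real.exp (t * x) ≤ Real.exp x := Real.exp_le_exp.2 (by nlinarith)
        rw [abs_le]; constructor <;> linarith)
      nlinarith [mul_le_mul_of_nonneg_left this hx, mul_nonneg hs.le hx]
    · simp only [Set.indicator, Set.mem_Iio, h1, h2, if_false]
      have := aux_h x (2 * Real.sinh (κ / 2)) (by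
        intro t ht ht2
        have h3 : Real.exp (t * x) ≤ Real.exp (κ / 2) := Real.exp_le_exp.2 (by nlinarith)
        have h4 : Real.exp (-(κ / 2)) ≤ Real.exp (t * x) := Real.exp_le_exp.2 (by nlinarith)
        have h5 : 1 ≤ Real.exp (κ / 2) := Real.one_le_exp (by linarith)
        have h6 : Real.exp (-(κ / 2)) ≤ 1 := Real.exp_le_one_iff.2 (by linarith)
        rw [Real.sinh_eq, abs_le]; constructor <;> linarith)
      nlinarith [mul_le_mul_of_nonneg_left this hx]

/-- If `ρ` satisfies the log-Metropolis–Hastings-ratio symmetry and `E[ρ²] < ∞`, then for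
every `κ > 0`,
`|E[ρ² ∫₀^{1/2} (1 - e^{tρ}) dt]| ≤ sinh(κ/2) E[ρ²] + E[ρ² 1{ρ < -κ}]`. -/
theorem stmt3 {Ω : Type*} [MeasurableSpace Ω] (P : Measure Ω) [IsProbabilityMeasure P]
    (ρ : Ω → ℝ) (hρ : Measurable ρ) (hsymm : LMHRSymmetric P ρ)
    (h2 : Integrable (fun ω => (ρ ω) ^ 2) P) (κ : ℝ) (hκ : 0 < κ) :
    |∫ ω, (ρ ω) ^ 2 * (∫ t in (0 : ℝ)..(1 / 2), (1 - Real.exp (t * ρ ω))) ∂P|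
      ≤ Real.sinh (κ / 2) * (∫ ω, (ρ ω) ^ 2 ∂P)
        + ∫ ω in {ω | ρ ω < -κ}, (ρ ω) ^ 2 ∂P := by
  have hint : Integrable (fun ω => (ρ ω) ^ 2 * Real.exp (ρ ω)) P := by
    by_contra hn
    have h := hsymm (fun x => x ^ 2) (by fun_prop) h2
    simp only [neg_sq] at h
    rw [integral_undef hn] at h
    have h0 := (integral_eq_zero_iff_of_nonneg (fun ω => sq_nonneg (ρ ω)) h2).1 h.symm
    apply hn
    refine (integrable_zero Ω ℝ P).congr ?_
    filter_upwards [h0] with ω hω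
    have hω' : ρ ω ^ 2 = 0 := hω
    simp [hω']
  have hms : MeasurableSet {ω | ρ ω < -κ} := measurableSet_lt hρ measurable_const
  have hfm : Measurable ((Set.Iio (-κ)).indicator (fun y : ℝ => y ^ 2)) :=
    (by fun_prop : Measurable (fun y : ℝ => y ^ 2)).indicator measurableSet_Iio
  have hfe : (fun ω => (Set.Iio (-κ)).indicator (fun y : ℝ => y ^ 2) (ρ ω))
      = {ω | ρ ω < -κ}.indicator (fun ω => ρ ω ^ 2) := by
    ext ω; simp [Set.indicator]
  have hf1 : Integrable (fun ω => (Set.Iio (-κ)).indicator (fun y : ℝ => y ^ 2) (ρ ω)) P := by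
    rw [hfe]; exact h2.indicator hms
  have hf2 : Integrable (fun ω => (Set.Iio (-κ)).indicator (fun y : ℝ => y ^ 2) (-ρ ω)
      * Real.exp (ρ ω)) P := by
    refine hint.mono' ((hfm.comp hρ.neg).mul hρ.exp).aestronglyMeasurable (ae_of_all _ ?_)
    intro ω
    rw [norm_mul, Real.norm_eq_abs (Real.exp _), abs_of_pos (Real.exp_pos _)]
    refine mul_le_mul_of_nonneg_right ?_ (Real.exp_pos _).le
    refine (norm_indicator_le_norm_self _ _).trans ?_
    simp
  have hs := hsymm _ hfm hf1
  have key := norm_integral_le_of_norm_le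
    (f := fun ω => (ρ ω) ^ 2 * (∫ t in (0 : ℝ)..(1 / 2), (1 - Real.exp (t * ρ ω))))
    ((h2.const_mul (Real.sinh (κ / 2))).add ((hf1.const_mul (1 / 2)).add (hf2.const_mul (1 / 2))))
    (ae_of_all P (fun ω => aux_pt (ρ ω) κ hκ))
  rw [Real.norm_eq_abs] at key
  refine key.trans (le_of_eq ?_)
  rw [integral_add' (h2.const_mul _) ((hf1.const_mul (1 / 2)).add (hf2.const_mul (1 / 2))),
    integral_add' (hf1.const_mul _) (hf2.const_mul _), integral_const_mul, integral_const_mul,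
    integral_const_mul, hs, hfe, integral_indicator hms]
  ring
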